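/- Let R, A > 0 and 0 < α < 1/2. Let g : ℝ² → ℝ be measurable with |g(y)| ≤ A |y|^{−3/2−α} for all |y| > R. Then there is a constant C = C(α), depending only on α, such that for every t > 0 and every x ∈ ℝ² with |x| > R + t, (1/(2π)) ∫_{B(x,t)} |g(y)| / √(t² − |y−x|²) dy ≤ C · A · |x|^{−1/2} (|x| − t)^{−α}. -/

import Mathlib

open MeasureTheory Set Metric

lemma arc_lintegral (s : ℝ) (hs : 0 ≤ s) :
    ∫⁻ θ : ℝ, ENNReal.ofReal (1 / Real.sqrt (s ^ 2 - θ ^ 2)) ≤ ENNReal.ofReal Real.pi := by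
  rcases hs.eq_or_lt with rfl | hs
  · have : ∀ θ : ℝ, Real.sqrt (0 ^ 2 - θ ^ 2) = 0 := fun θ =>
      Real.sqrt_eq_zero_of_nonpos (by nlinarith [sq_nonneg θ])
    simp_rw [this]
    simp
  have hder : ∀ x ∈ Ioo (-s) s, HasDerivAt (fun θ : ℝ => Real.arcsin (θ / s))
      (1 / Real.sqrt (s ^ 2 - x ^ 2)) x := by
    intro x hx
    have h1 : x / s ≠ -1 := by
      intro h
      rw [div_eq_iff hs.ne'] at h
      linarith [hx.1]
    have h2 : x / s ≠ 1 := by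
      intro h
      rw [div_eq_iff hs.ne'] at h
      linarith [hx.2]
    have h := (Real.hasDerivAt_arcsin h1 h2).comp x ((hasDerivAt_id x).div_const s)
    refine h.congr_deriv ?_
    have : s ^ 2 - x ^ 2 = s ^ 2 * (1 - (x / s) ^ 2) := by field_simp
    rw [this, Real.sqrt_mul (sq_nonneg s), Real.sqrt_sq hs.le]
    rw [div_mul_div_comm, mul_one, mul_comm s]
  have hcont : ContinuousOn (fun θ : ℝ => Real.arcsin (θ / s)) (Icc (-s) s) :=
    (Real.continuous_arcsin.comp (continuous_id.div_const s)).continuousOn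
  have hint : IntegrableOn (fun x => 1 / Real.sqrt (s ^ 2 - x ^ 2)) (Ioc (-s) s) :=
    intervalIntegral.integrableOn_deriv_of_nonneg hcont hder (fun x _ => by positivity)
  have hle : -s ≤ s := by linarith
  have hval := intervalIntegral.integral_eq_sub_of_hasDerivAt_of_le hle hcont hder
    ((intervalIntegrable_iff_integrableOn_Ioc_of_le hle).2 hint)
  rw [intervalIntegral.integral_of_le hle, neg_div, div_self hs.ne', Real.arcsin_neg,
    Real.arcsin_one] at hval
  have e : ∫⁻ θ : ℝ, ENNReal.ofReal (1 / Real.sqrt (s ^ 2 - θ ^ 2)) =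
      ∫⁻ θ in Ioc (-s) s, ENNReal.ofReal (1 / Real.sqrt (s ^ 2 - θ ^ 2)) := by
    rw [← lintegral_indicator measurableSet_Ioc]
    congr 1
    ext θ
    by_cases h : θ ∈ Ioc (-s) s
    · rw [indicator_of_mem h]
    · rw [indicator_of_notMem h]
      have : Real.sqrt (s ^ 2 - θ ^ 2) = 0 := by
        apply Real.sqrt_eq_zero_of_nonpos
        rw [mem_Ioc, not_and_or, not_lt, not_le] at h
        rcases h with h | h <;> nlinarith
      rw [this]; simp
  rw [e, ← ofReal_integral_eq_lintegral_ofReal hint (Filter.Eventually.of_forall fun x => by positivity),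
    hval]
  apply ENNReal.ofReal_le_ofReal
  linarith

lemma arc_pointwise (r t ρ θ : ℝ) (ht : 0 < t) (hr : t < r) (hρ : 0 < ρ)
    (hθ : θ ∈ Ioo (-Real.pi) Real.pi)
    (hD : 0 < t ^ 2 - (r ^ 2 + ρ ^ 2 - 2 * r * ρ * Real.cos θ)) :
    1 / Real.sqrt (t ^ 2 - (r ^ 2 + ρ ^ 2 - 2 * r * ρ * Real.cos θ)) ≤
      (Real.pi / 2) * (1 / Real.sqrt (r * ρ)) *
      (1 / Real.sqrt (Real.arccos ((ρ ^ 2 + r ^ 2 - t ^ 2) / (2 * r * ρ)) ^ 2 - θ ^ 2)) := by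
  have hr0 : 0 < r := ht.trans hr
  have ha : 0 < 2 * r * ρ := by positivity
  have hb : 0 < ρ ^ 2 + r ^ 2 - t ^ 2 := by nlinarith [sq_nonneg ρ]
  set q := (ρ ^ 2 + r ^ 2 - t ^ 2) / (2 * r * ρ) with hq
  have hq0 : 0 < q := div_pos hb ha
  have hqe : ρ ^ 2 + r ^ 2 - t ^ 2 = q * (2 * r * ρ) := by rw [hq]; field_simp
  have hqc : q < Real.cos θ := by
    rw [hq, div_lt_iff₀ ha]; nlinarith
  have hq1 : q ≤ 1 := hqc.le.trans (Real.cos_le_one θ)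
  set s := Real.arccos q with hs
  have hsc : Real.cos s = q := Real.cos_arccos (by linarith) hq1
  have hs2 : s ≤ Real.pi / 2 := Real.arccos_le_pi_div_two.2 hq0.le
  have habs : |θ| < s := by
    have h1 : Real.arccos (Real.cos |θ|) = |θ| :=
      Real.arccos_cos (abs_nonneg _) (abs_le.2 ⟨hθ.1.le, hθ.2.le⟩)
    rw [← h1, hs]
    apply Real.arccos_lt_arccos (by linarith) _ (Real.cos_le_one _)
    rwa [Real.cos_abs]
  obtain ⟨h1, h2⟩ := abs_lt.1 habs
  have hpi := Real.pi_pos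
  have k1 := Real.mul_le_sin (x := (s + θ) / 2) (by linarith) (by linarith)
  have k2 := Real.mul_le_sin (x := (s - θ) / 2) (by linarith) (by linarith)
  have k3 : (2 / Real.pi * ((s + θ) / 2)) * (2 / Real.pi * ((s - θ) / 2)) ≤
      Real.sin ((s + θ) / 2) * Real.sin ((s - θ) / 2) := by
    apply mul_le_mul k1 k2
    · have : 0 ≤ (s - θ) / 2 := by linarith
      positivity
    · have : 0 ≤ (s + θ) / 2 := by linarith
      exact le_trans (by positivity) k1
  have k4 : Real.cos θ - Real.cos s = 2 * (Real.sin ((s + θ) / 2) * Real.sin ((s - θ) / 2)) := by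
    rw [Real.cos_sub_cos]
    have e1 : (θ - s) / 2 = -((s - θ) / 2) := by ring
    rw [e1, Real.sin_neg, add_comm θ s]; ring
  have hpos : 0 < s ^ 2 - θ ^ 2 := by nlinarith
  have key : (2 / Real.pi) ^ 2 * ((r * ρ) * (s ^ 2 - θ ^ 2)) ≤
      t ^ 2 - (r ^ 2 + ρ ^ 2 - 2 * r * ρ * Real.cos θ) := by
    have e2 : t ^ 2 - (r ^ 2 + ρ ^ 2 - 2 * r * ρ * Real.cos θ) =
        2 * (r * ρ) * (Real.cos θ - Real.cos s) := by
      rw [hsc]; linarith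
    rw [e2, k4]
    have := mul_le_mul_of_nonneg_left k3 (show 0 ≤ 4 * (r * ρ) by positivity)
    linarith
  have hrρ : 0 < r * ρ := by positivity
  have key2 := Real.sqrt_le_sqrt key
  rw [Real.sqrt_mul (sq_nonneg _), Real.sqrt_sq (by positivity), Real.sqrt_mul hrρ.le] at key2
  have p1 := Real.sqrt_pos.2 hrρ
  have p2 := Real.sqrt_pos.2 hpos
  refine (one_div_le_one_div_of_le (by positivity) key2).trans (le_of_eq ?_)
  field_simp

lemma exists_iso (x : EuclideanSpace ℝ (Fin 2)) (hx : 0 < ‖x‖) :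
    ∃ f : ℂ ≃ₗᵢ[ℝ] EuclideanSpace ℝ (Fin 2), f (‖x‖ : ℂ) = x := by
  set e := Complex.orthonormalBasisOneI.repr
  set z : ℂ := e.symm x with hz
  have hn : ‖z‖ = ‖x‖ := e.symm.norm_map x
  have hx' : (‖x‖ : ℂ) ≠ 0 := by exact_mod_cast hx.ne'
  have hc : ‖z / (‖x‖ : ℂ)‖ = 1 := by
    rw [norm_div, hn]; simp [hx.ne']
  let c : Circle := ⟨z / (‖x‖ : ℂ), by simpa [Submonoid.unitSphere] using hc⟩
  refine ⟨(rotation c).trans e, ?_⟩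
  have : rotation c (‖x‖ : ℂ) = z := by
    rw [rotation_apply]
    exact div_mul_cancel₀ z hx'
  rw [LinearIsometryEquiv.trans_apply, this, hz, LinearIsometryEquiv.apply_symm_apply]

lemma radial_lintegral (α δ K : ℝ) (hα : 0 < α) (hδ : 0 < δ) (hK : 0 ≤ K) :
    ∫⁻ ρ in Ioi δ, ENNReal.ofReal (K * ρ ^ (-1 - α)) = ENNReal.ofReal (K * (δ ^ (-α) / α)) := by
  have hlt : -1 - α < -1 := by linarith
  rw [← ofReal_integral_eq_lintegral_ofReal ((integrableOn_Ioi_rpow_of_lt hlt hδ).const_mul K)]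
  · rw [integral_const_mul, integral_Ioi_rpow_of_lt hlt hδ]
    have : -1 - α + 1 = -α := by ring
    rw [this, neg_div_neg_eq]
  · filter_upwards [ae_restrict_mem measurableSet_Ioi] with ρ hρ
    have : 0 < ρ := hδ.trans hρ
    show 0 ≤ K * ρ ^ (-1 - α)
    positivity

lemma polar_normSq (r ρ θ : ℝ) :
    ‖((ρ : ℂ) * (Real.cos θ + Real.sin θ * Complex.I)) - (r : ℂ)‖ ^ 2 =
      r ^ 2 + ρ ^ 2 - 2 * r * ρ * Real.cos θ := by
  rw [← Complex.normSq_eq_norm_sq, Complex.normSq_apply]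
  simp [-Complex.ofReal_cos, -Complex.ofReal_sin]
  nlinarith [Real.sin_sq_add_cos_sq θ]

/-- The estimate of the term `I₂` in the proof of Lemma `lm1`: if
`|g(y)| ≤ A |y|^{-3/2-α}` for `|y| > R`, then
`(1/(2π)) ∫_{B(x,t)} |g(y)| / √(t² - |y-x|²) dy ≤ C A |x|^{-1/2} (|x| - t)^{-α}`
whenever `t > 0` and `|x| > R + t`, with `C` depending only on `α`. -/
theorem stmt_8 (α : ℝ) (hα : 0 < α) (hα' : α < 1 / 2) :
    ∃ C : ℝ, 0 < C ∧
      ∀ (R A : ℝ), 0 < R → 0 < A →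
      ∀ g : EuclideanSpace ℝ (Fin 2) → ℝ, Measurable g →
      (∀ y : EuclideanSpace ℝ (Fin 2), R < ‖y‖ → |g y| ≤ A * ‖y‖ ^ (-(3 / 2) - α)) →
      ∀ (t : ℝ) (x : EuclideanSpace ℝ (Fin 2)), 0 < t → R + t < ‖x‖ →
        ENNReal.ofReal (1 / (2 * Real.pi)) *
            ∫⁻ y in Metric.ball x t,
              ENNReal.ofReal (|g y| / Real.sqrt (t ^ 2 - ‖y - x‖ ^ 2)) ≤
          ENNReal.ofReal (C * A * ‖x‖ ^ (-(1 / 2) : ℝ) * (‖x‖ - t) ^ (-α)) := by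
  refine ⟨Real.pi / (4 * α), by positivity, ?_⟩
  intro R A hR hA g hg hgb t x ht hx
  have hpi := Real.pi_pos
  set r := ‖x‖ with hr
  have hr0 : 0 < r := by linarith
  have hδ : 0 < r - t := by linarith
  obtain ⟨f, hf⟩ := exists_iso x hr0
  rw [← hr] at hf
  set F : EuclideanSpace ℝ (Fin 2) → ENNReal := fun y =>
    ENNReal.ofReal (|g y| / Real.sqrt (t ^ 2 - ‖y - x‖ ^ 2)) with hF
  set S : ℝ → ℝ := fun ρ => Real.arccos ((ρ ^ 2 + r ^ 2 - t ^ 2) / (2 * r * ρ)) with hS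
  have hSm : Measurable S := by
    rw [hS]
    exact Real.continuous_arccos.measurable.comp (by fun_prop)
  set K : ℝ := A * (Real.pi / 2) * r ^ (-(1 / 2) : ℝ) with hK
  have hK0 : 0 < K := by positivity
  set P : ℝ → ENNReal := (Ioi (r - t)).indicator (fun ρ => ENNReal.ofReal (K * ρ ^ (-1 - α))) with hP
  have hPm : Measurable P := by
    apply Measurable.indicator _ measurableSet_Ioi
    fun_prop
  set G : ℝ × ℝ → ENNReal := fun p =>
    P p.1 * ENNReal.ofReal (1 / Real.sqrt (S p.1 ^ 2 - p.2 ^ 2)) with hG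
  have hGm : Measurable G := by
    rw [hG]
    apply (hPm.comp measurable_fst).mul
    have : Measurable (fun p : ℝ × ℝ => S p.1) := hSm.comp measurable_fst
    fun_prop
  have step1 : ∫⁻ y in Metric.ball x t, F y ≤ ∫⁻ p, G p := by
    rw [← lintegral_indicator measurableSet_ball,
      ← f.measurePreserving.lintegral_comp_emb f.toMeasurableEquiv.measurableEmbedding,
      ← Complex.lintegral_comp_polarCoord_symm]
    refine le_trans ?_ (setLIntegral_le_lintegral polarCoord.target G)
    apply setLIntegral_mono_ae hGm.aemeasurable
    refine Filter.Eventually.of_forall ?_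
    rintro ⟨ρ, θ⟩ hp
    obtain ⟨hρ, hθ⟩ : 0 < ρ ∧ θ ∈ Ioo (-Real.pi) Real.pi := hp
    rw [Complex.polarCoord_symm_apply]
    simp only
    set w : ℂ := (ρ : ℂ) * (Real.cos θ + Real.sin θ * Complex.I) with hw
    by_cases hmem : f w ∈ Metric.ball x t
    swap
    · rw [indicator_of_notMem hmem]; simp
    rw [indicator_of_mem hmem]
    have hwn : ‖f w‖ = ρ := by
      rw [f.norm_map]
      have := polar_normSq 0 ρ θ
      rw [← hw] at this
      simp at this
      exact (sq_eq_sq₀ (norm_nonneg w) hρ.le).1 this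
    have hdist : ‖f w - x‖ < t := by rwa [mem_ball_iff_norm] at hmem
    have hsq : ‖f w - x‖ ^ 2 = r ^ 2 + ρ ^ 2 - 2 * r * ρ * Real.cos θ := by
      rw [← polar_normSq, ← hw, ← f.norm_map (w - r), map_sub, hf]
    have hD : 0 < t ^ 2 - (r ^ 2 + ρ ^ 2 - 2 * r * ρ * Real.cos θ) := by
      rw [← hsq]; nlinarith [norm_nonneg (f w - x)]
    have hρδ : r - t < ρ := by
      have := norm_sub_norm_le x (f w)
      rw [norm_sub_rev, hwn, ← hr] at this
      linarith
    have hgw := hgb (f w) (by rw [hwn]; linarith)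
    rw [hwn] at hgw
    have hpt := arc_pointwise r t ρ θ ht (by linarith) hρ hθ hD
    simp only [hF, hG, hP, smul_eq_mul]
    rw [indicator_of_mem (show ρ ∈ Ioi (r - t) from hρδ), ← ENNReal.ofReal_mul hρ.le,
      ← ENNReal.ofReal_mul (by positivity), hsq]
    apply ENNReal.ofReal_le_ofReal
    have hT : 0 ≤ 1 / Real.sqrt (S ρ ^ 2 - θ ^ 2) := by positivity
    have hpow : ρ * ρ ^ (-(3 / 2) - α) * (1 / Real.sqrt (r * ρ)) =
        r ^ (-(1 / 2) : ℝ) * ρ ^ (-1 - α) := by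
      have e1 : 1 / Real.sqrt (r * ρ) = r ^ (-(1 / 2) : ℝ) * ρ ^ (-(1 / 2) : ℝ) := by
        rw [Real.sqrt_eq_rpow, Real.mul_rpow hr0.le hρ.le, Real.rpow_neg hr0.le,
          Real.rpow_neg hρ.le, one_div, mul_inv]
      have e2 : ρ ^ (-1 - α) = ρ * ρ ^ (-(3 / 2) - α) * ρ ^ (-(1 / 2) : ℝ) := by
        nth_rewrite 2 [← Real.rpow_one ρ]
        rw [← Real.rpow_add hρ, ← Real.rpow_add hρ]
        congr 1; ring
      rw [e1, e2]; ring
    calc ρ * (|g (f w)| / Real.sqrt (t ^ 2 - (r ^ 2 + ρ ^ 2 - 2 * r * ρ * Real.cos θ)))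
        = ρ * |g (f w)| *
          (1 / Real.sqrt (t ^ 2 - (r ^ 2 + ρ ^ 2 - 2 * r * ρ * Real.cos θ))) := by ring
      _ ≤ ρ * (A * ρ ^ (-(3 / 2) - α)) * ((Real.pi / 2) * (1 / Real.sqrt (r * ρ)) *
          (1 / Real.sqrt (S ρ ^ 2 - θ ^ 2))) := by
          apply mul_le_mul (mul_le_mul_of_nonneg_left hgw hρ.le) hpt (by positivity)
          positivity
      _ = A * (Real.pi / 2) * (ρ * ρ ^ (-(3 / 2) - α) * (1 / Real.sqrt (r * ρ))) *
          (1 / Real.sqrt (S ρ ^ 2 - θ ^ 2)) := by ring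
      _ = K * ρ ^ (-1 - α) * (1 / Real.sqrt (S ρ ^ 2 - θ ^ 2)) := by
          rw [hpow, hK]; ring
  have step2 : ∫⁻ p, G p ≤ ENNReal.ofReal (K * ((r - t) ^ (-α) / α)) * ENNReal.ofReal Real.pi := by
    rw [Measure.volume_eq_prod, lintegral_prod _ hGm.aemeasurable]
    calc ∫⁻ ρ, ∫⁻ θ, G (ρ, θ) ≤ ∫⁻ ρ, P ρ * ENNReal.ofReal Real.pi := by
          apply lintegral_mono
          intro ρ
          simp only [hG]
          rw [lintegral_const_mul _ (by fun_prop)]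
          gcongr
          exact arc_lintegral _ (Real.arccos_nonneg _)
      _ = _ := by
          rw [lintegral_mul_const _ hPm, hP, lintegral_indicator measurableSet_Ioi,
            radial_lintegral α (r - t) K hα hδ hK0.le]
  have hd : 0 ≤ (r - t) ^ (-α) := by positivity
  calc _ ≤ ENNReal.ofReal (1 / (2 * Real.pi)) *
        (ENNReal.ofReal (K * ((r - t) ^ (-α) / α)) * ENNReal.ofReal Real.pi) := by
        gcongr
        exact step1.trans step2
    _ = _ := by
        rw [← ENNReal.ofReal_mul (by positivity), ← ENNReal.ofReal_mul (by positivity)]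
        congr 1
        rw [hK]
        field_simp
        try ring
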